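/- The Jeffrey-divergence Gaussian kernel is not positive definite: for the symmetric positive definite 2×2 matrices X₁ = [[72,1],[1,88]], X₂ = [[123,−10],[−10,66]], X₃ = [[51,5],[5,109]], the 3×3 matrix K with entries K_{ij} = exp(−(1/4) δ_J²(Xᵢ, Xⱼ)) is not positive semidefinite (it has a negative eigenvalue); in particular there exists a real vector c ∈ ℝ³ with cᵀKc < 0. -/

import Mathlib

open Matrix

/-- The Jeffrey divergence `δ_J²(X,Y) = (1/2)Tr(X⁻¹Y) + (1/2)Tr(Y⁻¹X) − n` (here n = 2). -/
noncomputable def jeffreyDiv (X Y : Matrix (Fin 2) (Fin 2) ℝ) : ℝ :=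
  (1 / 2) * (X⁻¹ * Y).trace + (1 / 2) * (Y⁻¹ * X).trace - 2

/-- The three symmetric positive definite `2 × 2` counterexample matrices. -/
noncomputable def counterMatrices : Fin 3 → Matrix (Fin 2) (Fin 2) ℝ
  | 0 => !![72, 1; 1, 88]
  | 1 => !![123, -10; -10, 66]
  | 2 => !![51, 5; 5, 109]

/-!
If the kernel matrix, which has ones on its diagonal, were positive semidefinite, it would be the
Gram matrix of three unit vectors, and their angles would satisfy the spherical triangle inequality
`θ₁₂ ≤ θ₀₁ + θ₀₂`. Its entries `a = cos θ₀₁`, `b = cos θ₀₂`, `c = cos θ₁₂` are positive, so this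
inequality fails as soon as `c < a * b` and `(1 - a ^ 2) * (1 - b ^ 2) < (a * b - c) ^ 2`; the
second condition says that the determinant is negative. This happens here: the first matrix is so
close to the other two in Jeffrey divergence that these would have to be closer to each other than
they are.
-/

open scoped ComplexOrder in
theorem posDef_fin_two_iff {𝕜 : Type*} [RCLike 𝕜] {A : Matrix (Fin 2) (Fin 2) 𝕜}
    (hA : A.IsHermitian) : A.PosDef ↔ 0 < A 0 0 ∧ 0 < A.det := by
  refine ⟨fun h ↦ ⟨h.diag_pos, h.det_pos⟩, fun ⟨ha, hdet⟩ ↦ .of_dotProduct_mulVec_pos hA ?_⟩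
  intro x hx
  set z := A 0 0 * x 0 + A 0 1 * x 1
  have complete_square :
      A 0 0 * (star x ⬝ᵥ A *ᵥ x) = star z * z + A.det * (star (x 1) * x 1) := by
    have h00 : star (A 0 0) = A 0 0 := hA.apply 0 0
    have h01 : star (A 0 1) = A 1 0 := hA.apply 1 0
    simp only [z, dotProduct, mulVec, Fin.sum_univ_two, Pi.star_apply, det_fin_two, star_add,
      star_mul', h00, h01]
    ring
  refine (mul_pos_iff_of_pos_left ha).1 ?_
  rw [complete_square]
  by_cases hx1 : x 1 = 0
  · have hz : z ≠ 0 := by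
      have hx0 : x 0 ≠ 0 := fun hx0 ↦ hx (funext (Fin.forall_fin_two.2 ⟨hx0, hx1⟩))
      simpa [z, hx1] using ⟨ha.ne', hx0⟩
    exact add_pos_of_pos_of_nonneg (star_mul_self_pos hz.isUnit.isRegular)
      (mul_nonneg hdet.le (star_mul_self_nonneg _))
  · exact add_pos_of_nonneg_of_pos (star_mul_self_nonneg _)
      (mul_pos hdet (star_mul_self_pos (IsUnit.mk0 _ hx1).isRegular))

theorem exists_dotProduct_mulVec_neg_of_not_posSemidef {n : Type*} [Fintype n]
    {A : Matrix n n ℝ} (hA : A.IsSymm) (h : ¬ A.PosSemidef) : ∃ x, x ⬝ᵥ A *ᵥ x < 0 := by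
  contrapose! h
  exact .of_dotProduct_mulVec_nonneg (isHermitian_iff_isSymm.2 hA) h

theorem det_fin_three_of_isSymm_of_diag_eq_one {R : Type*} [CommRing R]
    {A : Matrix (Fin 3) (Fin 3) R} (hA : A.IsSymm) (hdiag : ∀ i, A i i = 1) :
    A.det = (1 - A 0 1 ^ 2) * (1 - A 0 2 ^ 2) - (A 0 1 * A 0 2 - A 1 2) ^ 2 := by
  rw [det_fin_three, hdiag, hdiag, hdiag, hA.apply 0 1, hA.apply 0 2, hA.apply 1 2]
  ring

theorem trace_adjugate_mul_comm_fin_two {R : Type*} [CommRing R] (A B : Matrix (Fin 2) (Fin 2) R) :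
    (adjugate A * B).trace = (adjugate B * A).trace := by
  simp only [adjugate_fin_two, trace_fin_two, mul_apply, Fin.sum_univ_two, of_apply, cons_val]
  ring

theorem jeffreyDiv_comm (X Y : Matrix (Fin 2) (Fin 2) ℝ) : jeffreyDiv X Y = jeffreyDiv Y X := by
  unfold jeffreyDiv
  ring

theorem jeffreyDiv_self {X : Matrix (Fin 2) (Fin 2) ℝ} (hX : IsUnit X.det) :
    jeffreyDiv X X = 0 := by
  norm_num [jeffreyDiv, nonsing_inv_mul X hX]

theorem jeffreyDiv_eq_trace_adjugate_mul (X Y : Matrix (Fin 2) (Fin 2) ℝ) :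
    jeffreyDiv X Y = (X.det⁻¹ + Y.det⁻¹) / 2 * (adjugate X * Y).trace - 2 := by
  simp only [jeffreyDiv, inv_def, Ring.inverse_eq_inv', smul_mul, trace_smul, smul_eq_mul,
    trace_adjugate_mul_comm_fin_two Y X]
  ring

/-- The matrix of the Gaussian kernel `exp (-β δ_J²)` on a family `X` of `2 × 2` matrices. -/
noncomputable def jeffreyKernelMatrix {ι : Type*} (β : ℝ) (X : ι → Matrix (Fin 2) (Fin 2) ℝ) :
    Matrix ι ι ℝ :=
  of fun i j ↦ Real.exp (-β * jeffreyDiv (X i) (X j))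

section KernelMatrix

variable {ι : Type*} (β : ℝ) (X : ι → Matrix (Fin 2) (Fin 2) ℝ)

theorem jeffreyKernelMatrix_apply (i j : ι) :
    jeffreyKernelMatrix β X i j = Real.exp (-β * jeffreyDiv (X i) (X j)) :=
  rfl

theorem jeffreyKernelMatrix_isSymm : (jeffreyKernelMatrix β X).IsSymm :=
  IsSymm.ext fun i j ↦ by
    rw [jeffreyKernelMatrix_apply, jeffreyKernelMatrix_apply, jeffreyDiv_comm]

theorem jeffreyKernelMatrix_apply_self {i : ι} (hi : IsUnit (X i).det) :
    jeffreyKernelMatrix β X i i = 1 := by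
  rw [jeffreyKernelMatrix_apply, jeffreyDiv_self hi, mul_zero, Real.exp_zero]

end KernelMatrix

theorem abs_exp_sub_cubic_le {x : ℝ} (hx : |x| ≤ 1) :
    |Real.exp x - (1 + x + x ^ 2 / 2 + x ^ 3 / 6)| ≤ x ^ 4 * (5 / 96) := by
  convert Real.exp_bound hx (n := 4) four_pos using 1
  · norm_num [Finset.sum_range_succ, Nat.factorial]
  · norm_num [Nat.factorial, Even.pow_abs (by decide : Even 4)]

theorem counterMatrices_posDef (i : Fin 3) : (counterMatrices i).PosDef := by
  have hsymm : (counterMatrices i).IsHermitian := by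
    ext j k
    fin_cases i <;> fin_cases j <;> fin_cases k <;> simp [counterMatrices]
  rw [posDef_fin_two_iff hsymm]
  fin_cases i <;> norm_num [counterMatrices, det_fin_two]

theorem jeffreyDiv_counterMatrices_zero_one :
    jeffreyDiv (counterMatrices 0) (counterMatrices 1) = 738331 / 3628145 := by
  rw [jeffreyDiv_eq_trace_adjugate_mul]
  norm_num [counterMatrices, det_fin_two, adjugate_fin_two, trace_fin_two, mul_apply]

theorem jeffreyDiv_counterMatrices_zero_two :
    jeffreyDiv (counterMatrices 0) (counterMatrices 2) = 3032867 / 35057890 := by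
  rw [jeffreyDiv_eq_trace_adjugate_mul]
  norm_num [counterMatrices, det_fin_two, adjugate_fin_two, trace_fin_two, mul_apply]

theorem jeffreyDiv_counterMatrices_one_two :
    jeffreyDiv (counterMatrices 1) (counterMatrices 2) = 6397056 / 11092903 := by
  rw [jeffreyDiv_eq_trace_adjugate_mul]
  norm_num [counterMatrices, det_fin_two, adjugate_fin_two, trace_fin_two, mul_apply]

theorem jeffreyKernelMatrix_counterMatrices_zero_one_gt :
    0.9503 < jeffreyKernelMatrix (1 / 4) counterMatrices 0 1 := by
  rw [jeffreyKernelMatrix_apply, jeffreyDiv_counterMatrices_zero_one]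
  have h := abs_exp_sub_cubic_le (x := -(1 / 4) * (738331 / 3628145)) (by norm_num [abs_le])
  linarith [(abs_le.1 h).1]

theorem jeffreyKernelMatrix_counterMatrices_zero_two_mem_Ioo :
    jeffreyKernelMatrix (1 / 4) counterMatrices 0 2 ∈ Set.Ioo 0.9786 1 := by
  rw [jeffreyKernelMatrix_apply, jeffreyDiv_counterMatrices_zero_two]
  have h := abs_exp_sub_cubic_le (x := -(1 / 4) * (3032867 / 35057890)) (by norm_num [abs_le])
  exact ⟨by linarith [(abs_le.1 h).1], by norm_num⟩

theorem jeffreyKernelMatrix_counterMatrices_one_two_lt :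
    jeffreyKernelMatrix (1 / 4) counterMatrices 1 2 < 0.8658 := by
  rw [jeffreyKernelMatrix_apply, jeffreyDiv_counterMatrices_one_two]
  have h := abs_exp_sub_cubic_le (x := -(1 / 4) * (6397056 / 11092903)) (by norm_num [abs_le])
  linarith [(abs_le.1 h).2]

theorem det_jeffreyKernelMatrix_counterMatrices_neg :
    (jeffreyKernelMatrix (1 / 4) counterMatrices).det < 0 := by
  rw [det_fin_three_of_isSymm_of_diag_eq_one (jeffreyKernelMatrix_isSymm _ _) fun i ↦
    jeffreyKernelMatrix_apply_self _ _ (counterMatrices_posDef i).det_pos.ne'.isUnit, sub_neg]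
  have ha := jeffreyKernelMatrix_counterMatrices_zero_one_gt
  obtain ⟨hb, hb_one⟩ := jeffreyKernelMatrix_counterMatrices_zero_two_mem_Ioo
  have hc := jeffreyKernelMatrix_counterMatrices_one_two_lt
  set a := jeffreyKernelMatrix (1 / 4) counterMatrices 0 1
  set b := jeffreyKernelMatrix (1 / 4) counterMatrices 0 2
  set c := jeffreyKernelMatrix (1 / 4) counterMatrices 1 2
  have hb_sq : 0 ≤ 1 - b ^ 2 := by nlinarith
  -- The determinant is only about `-4 * 10 ^ (-5)`, hence the four digits.
  calc
    (1 - a ^ 2) * (1 - b ^ 2) ≤ (1 - 0.9503 ^ 2) * (1 - 0.9786 ^ 2) := by gcongr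
    _ < (0.9503 * 0.9786 - 0.8658) ^ 2 := by norm_num
    _ ≤ (a * b - c) ^ 2 := by gcongr

/-- The Jeffrey-divergence Gaussian kernel with `β = 1/4` is not positive definite: the
`3 × 3` matrix `K` with `K_{ij} = exp(−(1/4) δ_J²(Xᵢ, Xⱼ))` built from the matrices
`X₁ = [[72,1],[1,88]]`, `X₂ = [[123,−10],[−10,66]]`, `X₃ = [[51,5],[5,109]]` is not
positive semidefinite; in particular there exists `c ∈ ℝ³` with `cᵀ K c < 0`. -/
theorem jeffrey_kernel_not_posSemidef :
    (∀ i, (counterMatrices i).PosDef) ∧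
    ¬ (Matrix.of fun i j : Fin 3 =>
        Real.exp (-(1 / 4) * jeffreyDiv (counterMatrices i) (counterMatrices j))).PosSemidef ∧
    ∃ c : Fin 3 → ℝ,
      c ⬝ᵥ (Matrix.of fun i j : Fin 3 =>
        Real.exp (-(1 / 4) * jeffreyDiv (counterMatrices i) (counterMatrices j))) *ᵥ c < 0 := by
  have hK : ¬ (jeffreyKernelMatrix (1 / 4) counterMatrices).PosSemidef := fun h ↦
    h.det_nonneg.not_gt det_jeffreyKernelMatrix_counterMatrices_neg
  exact ⟨counterMatrices_posDef, hK,
    exists_dotProduct_mulVec_neg_of_not_posSemidef (jeffreyKernelMatrix_isSymm _ _) hK⟩
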